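/- The splitting field of P₃(T) = T⁸ − T⁷ + 2T⁶ − 4T⁵ − 2T⁴ − 12T³ + 18T² − 27T + 81 over ℚ has degree 48 as a field extension of ℚ. -/

import Mathlib

open Polynomial

/-- The Weil polynomial `P₃` viewed as a polynomial with rational coefficients. -/
noncomputable def P3Q : Polynomial ℚ :=
  X ^ 8 - X ^ 7 + 2 * X ^ 6 - 4 * X ^ 5 - 2 * X ^ 4 - 12 * X ^ 3 + 18 * X ^ 2 - 27 * X + 81

/-!
`P₃(T) = T⁴ Q(T + 3 / T)` for the real Weil polynomial `Q = U⁴ - U³ - 10U² + 5U + 4`. Neither `Q`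
nor its resolvent cubic has a rational root and the discriminant of `Q` is not a square, so the
splitting field `L` of `Q` has degree `24`. The roots of `P₃` are `(u ± √(u² - 12)) / 2` for the
roots `u` of `Q`, and `u² - 12` is `-7` times a nonzero square in `ℚ(u)`, so `P₃` has splitting
field `L(√-7)`. All roots of `Q` are real, so `√-7 ∉ L` and the degree doubles.
-/

open scoped IntermediateField

section FieldExtensions

variable {K Ω : Type*} [Field K] [Field Ω] [Algebra K Ω]

theorem natDegree_dvd_finrank_of_aeval_eq_zero {f : K[X]} (hf : Irreducible f) {x : Ω}
    (hx : aeval x f = 0) : f.natDegree ∣ Module.finrank K Ω := by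
  have hint : IsIntegral K x := IsAlgebraic.isIntegral ⟨f, hf.ne_zero, hx⟩
  rw [minpoly.Irreducible.eq_minpoly hf hx,
    natDegree_C_mul (leadingCoeff_ne_zero.mpr hf.ne_zero)]
  exact minpoly.degree_dvd hint

theorem finrank_dvd_factorial_of_separable {f : K[X]} (hf : f.Separable) [IsSplittingField K Ω f] :
    Module.finrank K Ω ∣ f.natDegree.factorial := by
  have : Fact ((f.map (algebraMap K f.SplittingField)).Splits) := ⟨SplittingField.splits f⟩
  rw [(IsSplittingField.algEquiv Ω f).toLinearEquiv.finrank_eq, ← Gal.card_of_separable hf,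
    ← card_rootSet_eq_natDegree hf (SplittingField.splits f), ← Nat.card_eq_fintype_card,
    ← Nat.card_perm]
  exact Subgroup.card_dvd_of_injective _ (Gal.galActionHom_injective f f.SplittingField)

theorem finrank_adjoin_simple_eq_two {s : Ω} (hs : s ∉ (algebraMap K Ω).range)
    (hs2 : s ^ 2 ∈ (algebraMap K Ω).range) : Module.finrank K K⟮s⟯ = 2 := by
  obtain ⟨a, ha⟩ := hs2
  have hmonic : (X ^ 2 - C a).Monic := monic_X_pow_sub_C a two_ne_zero
  have hroot : aeval s (X ^ 2 - C a) = 0 := by simp [ha]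
  have hint : IsIntegral K s := ⟨_, hmonic, hroot⟩
  rw [IntermediateField.adjoin.finrank hint]
  refine le_antisymm ?_ ((minpoly.two_le_natDegree_iff hint).2 hs)
  simpa using natDegree_le_natDegree (minpoly.min K s hmonic hroot)

theorem finrank_sup_adjoin_simple_of_sq_mem {L : IntermediateField K Ω} {s : Ω} (hs : s ∉ L)
    (hs2 : s ^ 2 ∈ L) :
    Module.finrank K (L ⊔ K⟮s⟯ : IntermediateField K Ω) = Module.finrank K L * 2 := by
  have hrange (x : Ω) : x ∈ (algebraMap L Ω).range ↔ x ∈ L :=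
    ⟨fun ⟨y, hy⟩ ↦ hy ▸ y.2, fun hx ↦ ⟨⟨x, hx⟩, rfl⟩⟩
  have htwo : Module.finrank L L⟮s⟯ = 2 :=
    finrank_adjoin_simple_eq_two (mt (hrange s).1 hs) ((hrange _).2 hs2)
  rw [← IntermediateField.restrictScalars_adjoin_eq_sup, ← htwo]
  exact (Module.finrank_mul_finrank K L L⟮s⟯).symm

theorem finrank_splittingField_eq_finrank_adjoin_rootSet {f : K[X]}
    (hf : (f.map (algebraMap K Ω)).Splits) :
    Module.finrank K f.SplittingField =
      Module.finrank K (IntermediateField.adjoin K (f.rootSet Ω)) :=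
  have := IntermediateField.adjoin_rootSet_isSplittingField hf
  (IsSplittingField.algEquiv _ f).toLinearEquiv.finrank_eq.symm

theorem adjoin_rootSet_le_fieldRange {E : Type*} [Field E] [Algebra K E] {f : K[X]}
    (hf : (f.map (algebraMap K E)).Splits) (φ : E →ₐ[K] Ω) :
    IntermediateField.adjoin K (f.rootSet Ω) ≤ φ.fieldRange := by
  rw [IntermediateField.adjoin_le_iff, ← hf.image_rootSet φ]
  rintro _ ⟨x, -, rfl⟩
  exact ⟨x, rfl⟩

theorem not_isRoot_map_algebraMap_of_forall_not_isRoot_map {A B : Type*} [CommRing A]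
    [IsIntegrallyClosed A] [Algebra A K] [IsFractionRing A K] [CommRing B] (φ : A →+* B)
    {f : A[X]} (hf : f.Monic) (hφ : ∀ b, ¬ (f.map φ).IsRoot b) (r : K) :
    ¬ (f.map (algebraMap A K)).IsRoot r := by
  intro hr
  rw [IsRoot, eval_map_algebraMap] at hr
  obtain ⟨a, rfl⟩ := IsIntegrallyClosed.isIntegral_iff.1 ⟨f, hf, hr⟩
  have ha : f.eval a = 0 := by
    rwa [aeval_algebraMap_apply_eq_algebraMap_eval, FaithfulSMul.algebraMap_eq_zero_iff] at hr
  apply hφ (φ a)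
  rw [IsRoot, eval_map_apply, ha, map_zero]

end FieldExtensions

theorem splits_of_sign_changes {f : ℝ[X]} {n : ℕ} (hn : f.natDegree = n) {a : Fin (n + 1) → ℝ}
    (ha : StrictMono a) (hsign : ∀ i : Fin n, f.eval (a i.castSucc) * f.eval (a i.succ) < 0) :
    f.Splits := by
  have hroot (i : Fin n) : ∃ c ∈ Set.Ioo (a i.castSucc) (a i.succ), f.eval c = 0 := by
    have hle := (ha i.castSucc_lt_succ).le
    rcases mul_neg_iff.1 (hsign i) with ⟨hpos, hneg⟩ | ⟨hneg, hpos⟩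
    · exact intermediate_value_Ioo' hle f.continuous.continuousOn ⟨hneg, hpos⟩
    · exact intermediate_value_Ioo hle f.continuous.continuousOn ⟨hneg, hpos⟩
  choose c hc hfc using hroot
  have hc_mono : StrictMono c := fun i j hij ↦
    calc c i < a i.succ := (hc i).2
      _ ≤ a j.castSucc := ha.monotone (Fin.succ_le_castSucc_iff.2 hij)
      _ < c j := (hc j).1
  rcases eq_or_ne f 0 with rfl | hf
  · exact Splits.zero
  rw [splits_iff_card_roots, hn]
  refine le_antisymm (hn ▸ f.card_roots') ?_
  calc n = (Finset.univ.image c).card := by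
        rw [Finset.card_image_of_injective _ hc_mono.injective, Finset.card_fin]
    _ ≤ f.roots.toFinset.card := Finset.card_le_card fun x hx ↦ by
        obtain ⟨i, -, rfl⟩ := Finset.mem_image.1 hx
        exact Multiset.mem_toFinset.2 ((mem_roots hf).2 (hfc i))
    _ ≤ f.roots.card := f.roots.toFinset_card_le

/-- The coefficients of the monic quartic `X⁴ + aX³ + bX² + cX + d`; the analogue of `Cubic`. -/
@[ext]
structure MonicQuartic (R : Type*) where
  /-- The degree-3 coefficient. -/
  a : R
  /-- The degree-2 coefficient. -/
  b : R
  /-- The degree-1 coefficient. -/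
  c : R
  /-- The degree-0 coefficient. -/
  d : R

namespace MonicQuartic

section Ring

variable {R S : Type*} [CommRing R] [CommRing S]

/-- The polynomial with the given coefficients. -/
noncomputable def toPoly (q : MonicQuartic R) : R[X] :=
  X ^ 4 + C q.a * X ^ 3 + C q.b * X ^ 2 + C q.c * X + C q.d

/-- The monic quartic obtained by applying a ring homomorphism to the coefficients. -/
def map (φ : R →+* S) (q : MonicQuartic R) : MonicQuartic S :=
  ⟨φ q.a, φ q.b, φ q.c, φ q.d⟩

/-- The resolvent cubic, the one with roots `xy + zw`, `xz + yw` and `xw + yz` if the quartic has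
roots `x`, `y`, `z`, `w`; it has the same discriminant as the quartic. -/
def resolvent (q : MonicQuartic R) : Cubic R :=
  ⟨1, -q.b, q.a * q.c - 4 * q.d, 4 * q.b * q.d - q.c ^ 2 - q.a ^ 2 * q.d⟩

/-- The monic quartic with roots `x`, `y`, `z`, `w`. -/
def ofRoots (x y z w : R) : MonicQuartic R where
  a := -(x + y + z + w)
  b := x * y + x * z + x * w + y * z + y * w + z * w
  c := -(x * y * z + x * y * w + x * z * w + y * z * w)
  d := x * y * z * w

theorem toPoly_map (φ : R →+* S) (q : MonicQuartic R) :
    (q.map φ).toPoly = q.toPoly.map φ := by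
  simp [toPoly, map]

theorem resolvent_map (φ : R →+* S) (q : MonicQuartic R) :
    (q.map φ).resolvent = q.resolvent.map φ := by
  ext <;> simp [resolvent, map, Cubic.map, map_ofNat]

theorem discr_resolvent_map (φ : R →+* S) (q : MonicQuartic R) :
    (q.map φ).resolvent.discr = φ q.resolvent.discr := by
  simp [resolvent, map, Cubic.discr, map_ofNat]

theorem eval_toPoly (q : MonicQuartic R) (r : R) :
    q.toPoly.eval r = r ^ 4 + q.a * r ^ 3 + q.b * r ^ 2 + q.c * r + q.d := by
  simp [toPoly]

theorem eval_resolvent (q : MonicQuartic R) (r : R) :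
    q.resolvent.toPoly.eval r = r ^ 3 - q.b * r ^ 2 + (q.a * q.c - 4 * q.d) * r +
      (4 * q.b * q.d - q.c ^ 2 - q.a ^ 2 * q.d) := by
  simp [resolvent, Cubic.toPoly, sub_eq_add_neg]

theorem toPoly_injective : Function.Injective (toPoly : MonicQuartic R → R[X]) := by
  intro p q h
  ext
  · simpa [toPoly, coeff_X, coeff_C] using congrArg (coeff · 3) h
  · simpa [toPoly, coeff_X, coeff_C] using congrArg (coeff · 2) h
  · simpa [toPoly, coeff_X, coeff_C] using congrArg (coeff · 1) h
  · simpa [toPoly, coeff_X, coeff_C] using congrArg (coeff · 0) h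

theorem natDegree_toPoly [Nontrivial R] (q : MonicQuartic R) : q.toPoly.natDegree = 4 := by
  rw [toPoly]; compute_degree!

theorem monic_toPoly (q : MonicQuartic R) : q.toPoly.Monic := by
  rw [toPoly]; monicity!

theorem monic_resolvent (q : MonicQuartic R) : q.resolvent.toPoly.Monic :=
  Cubic.monic_of_a_eq_one rfl

theorem natDegree_resolvent [Nontrivial R] (q : MonicQuartic R) :
    q.resolvent.toPoly.natDegree = 3 :=
  Cubic.natDegree_of_a_ne_zero one_ne_zero

theorem toPoly_ofRoots (x y z w : R) :
    (ofRoots x y z w).toPoly = (X - C x) * (X - C y) * (X - C z) * (X - C w) := by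
  simp only [toPoly, ofRoots, C_neg, C_add, C_mul]
  ring

theorem roots_toPoly_ofRoots [IsDomain R] (x y z w : R) :
    (ofRoots x y z w).toPoly.roots = {x, y, z, w} := by
  rw [← roots_multiset_prod_X_sub_C {x, y, z, w}, toPoly_ofRoots]
  simp [mul_assoc]

theorem isRoot_resolvent_ofRoots (x y z w : R) :
    (ofRoots x y z w).resolvent.toPoly.IsRoot (x * y + z * w) := by
  simp only [IsRoot, eval_resolvent, ofRoots]
  ring

theorem discr_resolvent_ofRoots (x y z w : R) :
    (ofRoots x y z w).resolvent.discr =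
      ((x - y) * (x - z) * (x - w) * (y - z) * (y - w) * (z - w)) ^ 2 := by
  simp only [resolvent, ofRoots, Cubic.discr]
  ring

theorem exists_map_eq_ofRoots [IsDomain S] {φ : R →+* S} {q : MonicQuartic R}
    (hq : (q.toPoly.map φ).Splits) : ∃ x y z w, q.map φ = ofRoots x y z w := by
  have hcard : (q.toPoly.map φ).roots.card = 4 := by
    rw [← hq.natDegree_eq_card_roots, ← toPoly_map, natDegree_toPoly]
  obtain ⟨x, y, z, w, hroots⟩ := Multiset.card_eq_four.1 hcard
  refine ⟨x, y, z, w, toPoly_injective ?_⟩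
  rw [toPoly_map, hq.eq_prod_roots_of_monic (q.monic_toPoly.map φ), hroots, toPoly_ofRoots]
  simp [mul_assoc]

/-- A factorization into two quadratics splits the roots as `{x, y}`, `{z, w}`, and the sum of the
constant terms is `xy + zw`. -/
theorem isRoot_resolvent_of_toPoly_eq_mul {q : MonicQuartic R} {b₁ c₁ b₂ c₂ : R}
    (h : q.toPoly = (X ^ 2 + C b₁ * X + C c₁) * (X ^ 2 + C b₂ * X + C c₂)) :
    q.resolvent.toPoly.IsRoot (c₁ + c₂) := by
  obtain rfl : q = ⟨b₁ + b₂, c₁ + c₂ + b₁ * b₂, b₁ * c₂ + b₂ * c₁, c₁ * c₂⟩ :=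
    toPoly_injective <| by
      rw [h]
      simp only [toPoly, C_add, C_mul]
      ring
  simp only [IsRoot, eval_resolvent]
  ring

end Ring

section Field

variable {K L : Type*} [Field K] [Field L] [Algebra K L] {q : MonicQuartic K}

theorem irreducible_toPoly (hq : ∀ r, ¬ q.toPoly.IsRoot r)
    (hres : ∀ r, ¬ q.resolvent.toPoly.IsRoot r) : Irreducible q.toPoly := by
  have hne : q.toPoly ≠ 1 := ne_of_apply_ne natDegree (by simp [natDegree_toPoly])
  have quadratic {f : K[X]} (hf : f.Monic) (h2 : f.natDegree = 2) :
      f = X ^ 2 + C (f.coeff 1) * X + C (f.coeff 0) := by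
    have hlead : f.coeff 2 = 1 := h2 ▸ hf.coeff_natDegree
    simpa [hlead] using eq_quadratic_of_degree_le_two (natDegree_le_iff_degree_le.1 h2.le)
  refine q.monic_toPoly.irreducible_iff_natDegree'.2 ⟨hne, fun f g hf hg hfg hdeg ↦ ?_⟩
  have hsum : f.natDegree + g.natDegree = 4 := by
    rw [← hf.natDegree_mul hg, hfg, natDegree_toPoly]
  rw [natDegree_toPoly, Finset.mem_Ioc] at hdeg
  obtain hg1 | hg2 : g.natDegree = 1 ∨ g.natDegree = 2 := by omega
  · obtain ⟨r, hr⟩ := exists_root_of_degree_eq_one ((degree_eq_iff_natDegree_eq hg.ne_zero).2 hg1)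
    exact hq r (hfg ▸ root_mul_left_of_isRoot f hr)
  · rw [quadratic hf (by omega), quadratic hg hg2] at hfg
    exact hres _ (isRoot_resolvent_of_toPoly_eq_mul hfg.symm)

theorem irreducible_resolvent (hres : ∀ r, ¬ q.resolvent.toPoly.IsRoot r) :
    Irreducible q.resolvent.toPoly :=
  irreducible_of_degree_le_three_of_not_isRoot (by simp [natDegree_resolvent]) hres

theorem separable_toPoly (hdiscr : q.resolvent.discr ≠ 0) : q.toPoly.Separable := by
  let φ := algebraMap K q.toPoly.SplittingField
  have hsplits : (q.toPoly.map φ).Splits := SplittingField.splits q.toPoly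
  obtain ⟨x, y, z, w, hroots⟩ := exists_map_eq_ofRoots hsplits
  have hne : ((x - y) * (x - z) * (x - w) * (y - z) * (y - w) * (z - w)) ^ 2 ≠ 0 := by
    rw [← discr_resolvent_ofRoots, ← hroots, discr_resolvent_map]
    exact (map_ne_zero φ).2 hdiscr
  rw [← nodup_aroots_iff_of_splits q.monic_toPoly.ne_zero hsplits, aroots, ← toPoly_map, hroots,
    roots_toPoly_ofRoots]
  simpa [sub_ne_zero, and_assoc] using hne

theorem irreducible_toPoly_map (hq : Irreducible q.toPoly)
    (hres : Irreducible q.resolvent.toPoly) (h4 : ¬ 4 ∣ Module.finrank K L)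
    (h3 : ¬ 3 ∣ Module.finrank K L) : Irreducible (q.map (algebraMap K L)).toPoly := by
  apply irreducible_toPoly
  · intro r hr
    rw [toPoly_map, IsRoot, eval_map_algebraMap] at hr
    exact h4 (q.natDegree_toPoly ▸ natDegree_dvd_finrank_of_aeval_eq_zero hq hr)
  · intro r hr
    rw [resolvent_map, Cubic.map_toPoly, IsRoot, eval_map_algebraMap] at hr
    exact h3 (q.natDegree_resolvent ▸ natDegree_dvd_finrank_of_aeval_eq_zero hres hr)

/-- The quartic stays irreducible over the quadratic extension `K(√Δ) ⊆ L`, whence `8 ∣ [L : K]`. -/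
theorem twentyFour_dvd_finrank (hq : Irreducible q.toPoly)
    (hres : Irreducible q.resolvent.toPoly) (hdiscr : ¬ IsSquare q.resolvent.discr)
    (hL : (q.toPoly.map (algebraMap K L)).Splits) : 24 ∣ Module.finrank K L := by
  obtain ⟨x, y, z, w, hroots⟩ := exists_map_eq_ofRoots hL
  set δ : L := (x - y) * (x - z) * (x - w) * (y - z) * (y - w) * (z - w)
  have hδ_sq : δ ^ 2 = algebraMap K L q.resolvent.discr := by
    rw [← discr_resolvent_map, hroots, discr_resolvent_ofRoots]
  have hδ : δ ∉ (algebraMap K L).range := by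
    rintro ⟨a, ha⟩
    refine hdiscr ⟨a, (algebraMap K L).injective ?_⟩
    rw [map_mul, ha, ← hδ_sq, sq]
  have finrank_two : Module.finrank K K⟮δ⟯ = 2 := finrank_adjoin_simple_eq_two hδ ⟨_, hδ_sq.symm⟩
  have three_dvd : 3 ∣ Module.finrank K L := by
    have hroot : aeval (x * y + z * w) q.resolvent.toPoly = 0 := by
      rw [← eval_map_algebraMap, ← Cubic.map_toPoly, ← resolvent_map, hroots]
      exact isRoot_resolvent_ofRoots x y z w
    exact q.natDegree_resolvent ▸ natDegree_dvd_finrank_of_aeval_eq_zero hres hroot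
  have four_dvd : 4 ∣ Module.finrank K⟮δ⟯ L := by
    have hirr : Irreducible (q.map (algebraMap K K⟮δ⟯)).toPoly :=
      irreducible_toPoly_map hq hres (by simp [finrank_two]) (by simp [finrank_two])
    have hroot : aeval x (q.map (algebraMap K K⟮δ⟯)).toPoly = 0 := by
      rw [toPoly_map, aeval_map_algebraMap, ← eval_map_algebraMap, ← toPoly_map, hroots,
        toPoly_ofRoots]
      simp
    simpa only [natDegree_toPoly] using natDegree_dvd_finrank_of_aeval_eq_zero hirr hroot
  have tower := Module.finrank_mul_finrank K K⟮δ⟯ L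
  rw [finrank_two] at tower
  omega

theorem finrank_eq_twentyFour (hq : ∀ r, ¬ q.toPoly.IsRoot r)
    (hres : ∀ r, ¬ q.resolvent.toPoly.IsRoot r) (hdiscr : ¬ IsSquare q.resolvent.discr)
    [IsSplittingField K L q.toPoly] : Module.finrank K L = 24 := by
  have hsep : q.toPoly.Separable :=
    separable_toPoly fun h ↦ hdiscr (h ▸ IsSquare.zero)
  have hdvd := finrank_dvd_factorial_of_separable (Ω := L) hsep
  rw [natDegree_toPoly] at hdvd
  exact Nat.dvd_antisymm hdvd <| twentyFour_dvd_finrank (irreducible_toPoly hq hres)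
    (irreducible_resolvent hres) hdiscr (IsSplittingField.splits L q.toPoly)

end Field

end MonicQuartic

section WeilPolynomial

/-- The polynomial `T ^ n * f (T + q / T)` with `n = f.natDegree`, denominators cleared termwise.
If `f` is the real Weil polynomial of an abelian variety over `𝔽_q`, this is its Weil polynomial. -/
noncomputable def weilPolynomial {R : Type*} [CommRing R] (q : R) (f : R[X]) : R[X] :=
  ∑ i ∈ Finset.range (f.natDegree + 1),
    C (f.coeff i) * X ^ (f.natDegree - i) * (X ^ 2 + C q) ^ i

theorem aeval_weilPolynomial {R A : Type*} [CommRing R] [CommRing A] [Algebra R A] {q : R}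
    (f : R[X]) {t t' : A} (h : t * t' = algebraMap R A q) :
    aeval t (weilPolynomial q f) = t ^ f.natDegree * aeval (t + t') f := by
  have hsq : t ^ 2 + algebraMap R A q = t * (t + t') := by rw [← h]; ring
  simp only [aeval_eq_sum_range (p := f), weilPolynomial, map_sum, Finset.mul_sum, map_mul, map_pow,
    map_add, aeval_X, aeval_C, hsq, Algebra.smul_def]
  refine Finset.sum_congr rfl fun i hi ↦ ?_
  rw [← pow_sub_mul_pow t (Finset.mem_range_succ_iff.1 hi), mul_pow]
  ring

theorem weilPolynomial_toPoly {R : Type*} [CommRing R] [Nontrivial R] (q : R)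
    (p : MonicQuartic R) :
    weilPolynomial q p.toPoly = C p.d * X ^ 4 + C p.c * X ^ 3 * (X ^ 2 + C q) +
      C p.b * X ^ 2 * (X ^ 2 + C q) ^ 2 + C p.a * X * (X ^ 2 + C q) ^ 3 + (X ^ 2 + C q) ^ 4 := by
  rw [weilPolynomial, MonicQuartic.natDegree_toPoly]
  simp [Finset.sum_range_succ, MonicQuartic.toPoly, coeff_X, coeff_C]

theorem eval_zero_weilPolynomial {R : Type*} [CommRing R] (q : R) (f : R[X]) :
    (weilPolynomial q f).eval 0 = f.leadingCoeff * q ^ f.natDegree := by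
  rw [weilPolynomial, eval_finsetSum, Finset.sum_range_succ, Finset.sum_eq_zero]
  · simp
  · intro i hi
    simp [(Nat.sub_pos_of_lt (Finset.mem_range.1 hi)).ne']

variable {K Ω : Type*} [Field K] [Field Ω] [Algebra K Ω]

theorem weilPolynomial_ne_zero {q : K} {f : K[X]} (hq : q ≠ 0) (hf : f ≠ 0) :
    weilPolynomial q f ≠ 0 := fun h ↦ by
  have h0 := eval_zero_weilPolynomial q f
  rw [h, eval_zero] at h0
  exact mul_ne_zero (leadingCoeff_ne_zero.2 hf) (pow_ne_zero _ hq) h0.symm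

theorem mem_rootSet_weilPolynomial {q : K} {f : K[X]} (hq : q ≠ 0) {t t' : Ω}
    (h : t * t' = algebraMap K Ω q) :
    t ∈ (weilPolynomial q f).rootSet Ω ↔ t + t' ∈ f.rootSet Ω := by
  have ht : t ≠ 0 := by
    rintro rfl
    exact hq ((map_eq_zero (algebraMap K Ω)).1 (by rw [← h, zero_mul]))
  rcases eq_or_ne f 0 with rfl | hf
  · simp [weilPolynomial]
  · simp [mem_rootSet, weilPolynomial_ne_zero hq hf, hf, aeval_weilPolynomial f h, ht]

theorem ne_zero_of_mem_rootSet_weilPolynomial {q : K} {f : K[X]} (hq : q ≠ 0) {t : Ω}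
    (ht : t ∈ (weilPolynomial q f).rootSet Ω) : t ≠ 0 := by
  rintro rfl
  obtain ⟨hne, h0⟩ := mem_rootSet.1 ht
  have hf : f ≠ 0 := by
    rintro rfl
    simp [weilPolynomial] at hne
  rw [← map_zero (algebraMap K Ω), aeval_algebraMap_apply_eq_algebraMap_eval,
    (algebraMap K Ω).injective.eq_iff, eval_zero_weilPolynomial] at h0
  exact mul_ne_zero (leadingCoeff_ne_zero.2 hf) (pow_ne_zero _ hq) h0

theorem sq_sub_four_mul_eq_sq_of_mem_rootSet {q δ : K} {f g : K[X]} {s u : Ω}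
    (hs : s ^ 2 = algebraMap K Ω δ) (hfg : f ∣ X ^ 2 - C (4 * q) - C δ * g ^ 2)
    (hu : u ∈ f.rootSet Ω) : u ^ 2 - 4 * algebraMap K Ω q = (s * aeval u g) ^ 2 := by
  have h := aeval_eq_zero_of_dvd_aeval_eq_zero hfg (mem_rootSet.1 hu).2
  simp only [map_sub, map_mul, map_pow, aeval_X, aeval_C, map_ofNat, ← hs] at h
  linear_combination h

variable [NeZero (2 : Ω)] {q δ : K} {f g : K[X]} {s : Ω}

theorem adjoin_rootSet_weilPolynomial_le (hq : q ≠ 0) (hs : s ^ 2 = algebraMap K Ω δ)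
    (hfg : f ∣ X ^ 2 - C (4 * q) - C δ * g ^ 2) :
    IntermediateField.adjoin K ((weilPolynomial q f).rootSet Ω) ≤
      IntermediateField.adjoin K (f.rootSet Ω) ⊔ K⟮s⟯ := by
  set M := IntermediateField.adjoin K (f.rootSet Ω) ⊔ K⟮s⟯
  rw [IntermediateField.adjoin_le_iff]
  intro t ht
  obtain ⟨t', htt'⟩ : ∃ t', t * t' = algebraMap K Ω q :=
    ⟨_, mul_div_cancel₀ _ (ne_zero_of_mem_rootSet_weilPolynomial hq ht)⟩
  have hu : t + t' ∈ f.rootSet Ω := (mem_rootSet_weilPolynomial hq htt').1 ht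
  have huM : t + t' ∈ M := le_sup_left (a := IntermediateField.adjoin K (f.rootSet Ω))
    (IntermediateField.subset_adjoin K _ hu)
  have hsM : s ∈ M := le_sup_right (b := K⟮s⟯) (IntermediateField.mem_adjoin_simple_self K s)
  have hsg : s * aeval (t + t') g ∈ M := mul_mem hsM (M.aeval_coe ⟨_, huM⟩ g ▸ SetLike.coe_mem _)
  have hsq : (t - t') ^ 2 = (s * aeval (t + t') g) ^ 2 := by
    rw [← sq_sub_four_mul_eq_sq_of_mem_rootSet hs hfg hu, ← htt']
    ring
  have hdiff : t - t' ∈ M := by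
    rcases sq_eq_sq_iff_eq_or_eq_neg.1 hsq with h | h
    · exact h ▸ hsg
    · exact h ▸ neg_mem hsg
  have ht_eq : t = (t + t' + (t - t')) / 2 := by field_simp; ring
  rw [SetLike.mem_coe, ht_eq]
  exact div_mem (add_mem huM hdiff) (ofNat_mem M 2)

theorem le_adjoin_rootSet_weilPolynomial (hq : q ≠ 0) (hf : (f.rootSet Ω).Nonempty)
    (hs : s ^ 2 = algebraMap K Ω δ) (hfg : f ∣ X ^ 2 - C (4 * q) - C δ * g ^ 2)
    (hcop : IsCoprime f g) :
    IntermediateField.adjoin K (f.rootSet Ω) ⊔ K⟮s⟯ ≤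
      IntermediateField.adjoin K ((weilPolynomial q f).rootSet Ω) := by
  set N := IntermediateField.adjoin K ((weilPolynomial q f).rootSet Ω)
  have hN {u : Ω} (hu : u ∈ f.rootSet Ω) : u ∈ N ∧ s * aeval u g ∈ N := by
    set v := s * aeval u g
    have hsum : (u + v) / 2 + (u - v) / 2 = u := by field_simp; ring
    have hdiff : (u + v) / 2 - (u - v) / 2 = v := by field_simp; ring
    have hprod : (u + v) / 2 * ((u - v) / 2) = algebraMap K Ω q := by
      field_simp
      linear_combination sq_sub_four_mul_eq_sq_of_mem_rootSet hs hfg hu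
    have hadd : (u + v) / 2 ∈ N := IntermediateField.subset_adjoin K _ <|
      (mem_rootSet_weilPolynomial hq hprod).2 (hsum.symm ▸ hu)
    have hsub : (u - v) / 2 ∈ N := IntermediateField.subset_adjoin K _ <|
      (mem_rootSet_weilPolynomial hq (by rwa [mul_comm])).2 (by rwa [add_comm, hsum])
    exact ⟨hsum ▸ add_mem hadd hsub, hdiff ▸ sub_mem hadd hsub⟩
  refine sup_le (IntermediateField.adjoin_le_iff.2 fun u hu ↦ (hN hu).1)
    (IntermediateField.adjoin_simple_le_iff.2 ?_)
  obtain ⟨u, hu⟩ := hf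
  have hgu : aeval u g ≠ 0 := fun hg ↦ by
    simpa [hg, (mem_rootSet.1 hu).2] using hcop.map (aeval (R := K) u).toRingHom
  rw [← mul_div_cancel_right₀ s hgu]
  exact div_mem (hN hu).2 (N.aeval_coe ⟨u, (hN hu).1⟩ g ▸ SetLike.coe_mem _)

/-- The roots of `T ^ 2 - u * T + q` are `(u ± s * g u) / 2`. -/
theorem adjoin_rootSet_weilPolynomial (hq : q ≠ 0) (hf : (f.rootSet Ω).Nonempty)
    (hs : s ^ 2 = algebraMap K Ω δ) (hfg : f ∣ X ^ 2 - C (4 * q) - C δ * g ^ 2)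
    (hcop : IsCoprime f g) :
    IntermediateField.adjoin K ((weilPolynomial q f).rootSet Ω) =
      IntermediateField.adjoin K (f.rootSet Ω) ⊔ K⟮s⟯ :=
  (adjoin_rootSet_weilPolynomial_le hq hs hfg).antisymm
    (le_adjoin_rootSet_weilPolynomial hq hf hs hfg hcop)

end WeilPolynomial

section RealWeilQuartic

/-- The real Weil polynomial `Q` of the curve, with `P₃(T) = T⁴ Q(T + 3 / T)`, over any ring. -/
def realWeilQuartic (R : Type*) [CommRing R] : MonicQuartic R := ⟨-1, -10, 5, 4⟩

theorem map_realWeilQuartic {R S : Type*} [CommRing R] [CommRing S] (φ : R →+* S) :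
    (realWeilQuartic R).map φ = realWeilQuartic S := by
  simp [realWeilQuartic, MonicQuartic.map, map_ofNat]

theorem P3Q_eq_weilPolynomial : P3Q = weilPolynomial 3 (realWeilQuartic ℚ).toPoly := by
  simp only [P3Q, weilPolynomial_toPoly, realWeilQuartic, map_neg, map_one, map_ofNat]
  ring

theorem not_isRoot_realWeilQuartic (r : ℚ) : ¬ (realWeilQuartic ℚ).toPoly.IsRoot r := by
  have hmod (b : ZMod 5) : ¬ (realWeilQuartic (ZMod 5)).toPoly.IsRoot b := by
    rw [IsRoot, MonicQuartic.eval_toPoly]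
    revert b
    decide
  rw [← map_realWeilQuartic (Int.castRingHom (ZMod 5)), MonicQuartic.toPoly_map] at hmod
  rw [← map_realWeilQuartic (algebraMap ℤ ℚ), MonicQuartic.toPoly_map]
  exact not_isRoot_map_algebraMap_of_forall_not_isRoot_map _ (MonicQuartic.monic_toPoly _) hmod r

theorem not_isRoot_resolvent_realWeilQuartic (r : ℚ) :
    ¬ (realWeilQuartic ℚ).resolvent.toPoly.IsRoot r := by
  have hmod (b : ZMod 11) : ¬ (realWeilQuartic (ZMod 11)).resolvent.toPoly.IsRoot b := by
    rw [IsRoot, MonicQuartic.eval_resolvent]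
    revert b
    decide
  rw [← map_realWeilQuartic (Int.castRingHom (ZMod 11)), MonicQuartic.resolvent_map,
    Cubic.map_toPoly] at hmod
  rw [← map_realWeilQuartic (algebraMap ℤ ℚ), MonicQuartic.resolvent_map, Cubic.map_toPoly]
  exact not_isRoot_map_algebraMap_of_forall_not_isRoot_map _ (MonicQuartic.monic_resolvent _) hmod r

theorem not_isSquare_discr_resolvent_realWeilQuartic :
    ¬ IsSquare (realWeilQuartic ℚ).resolvent.discr := by
  have h : (realWeilQuartic ℚ).resolvent.discr = 587097 := by
    norm_num [realWeilQuartic, MonicQuartic.resolvent, Cubic.discr]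
  rw [h]
  norm_num

theorem finrank_adjoin_rootSet_realWeilQuartic : Module.finrank ℚ
    (IntermediateField.adjoin ℚ ((realWeilQuartic ℚ).toPoly.rootSet ℂ)) = 24 := by
  rw [← finrank_splittingField_eq_finrank_adjoin_rootSet (IsAlgClosed.splits _)]
  exact MonicQuartic.finrank_eq_twentyFour not_isRoot_realWeilQuartic
    not_isRoot_resolvent_realWeilQuartic not_isSquare_discr_resolvent_realWeilQuartic

theorem rootSet_realWeilQuartic_nonempty : ((realWeilQuartic ℚ).toPoly.rootSet ℂ).Nonempty := by
  have hdeg : (realWeilQuartic ℚ).toPoly.degree ≠ 0 :=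
    (natDegree_pos_iff_degree_pos.1 (by simp [MonicQuartic.natDegree_toPoly])).ne'
  obtain ⟨u, hu⟩ := IsAlgClosed.exists_aeval_eq_zero ℂ _ hdeg
  exact ⟨u, mem_rootSet.2 ⟨(MonicQuartic.monic_toPoly _).ne_zero, hu⟩⟩

theorem splits_realWeilQuartic : (realWeilQuartic ℝ).toPoly.Splits := by
  have hmono : StrictMono ![(-3 : ℝ), -1, 0, 1, 4] := by
    simp [Fin.strictMono_iff_lt_succ, Fin.forall_fin_succ]
  refine splits_of_sign_changes (MonicQuartic.natDegree_toPoly _) hmono ?_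
  norm_num [Fin.forall_fin_succ, MonicQuartic.eval_toPoly, realWeilQuartic]

/-- A polynomial `g` with `u ^ 2 - 12 = -7 * g u ^ 2` at every root `u` of `Q`, so that the
square roots of the discriminants `u ^ 2 - 12` of `T ^ 2 - u * T + 3` all lie in `ℚ(u, √-7)`. -/
noncomputable def discrSqrt : ℚ[X] :=
  C (1 / 21) * (4 * X ^ 3 - 2 * X ^ 2 - 41 * X + 10)

theorem realWeilQuartic_dvd_sub_discrSqrt_sq : (realWeilQuartic ℚ).toPoly ∣
    X ^ 2 - C (4 * 3) - C (-7) * discrSqrt ^ 2 := by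
  refine ⟨C (1 / 63) * (16 * X ^ 2 - 164), Polynomial.funext fun x ↦ ?_⟩
  simp only [discrSqrt, realWeilQuartic, MonicQuartic.eval_toPoly, eval_add, eval_sub, eval_mul,
    eval_pow, eval_X, eval_C, eval_ofNat]
  ring

theorem isCoprime_realWeilQuartic_discrSqrt :
    IsCoprime (realWeilQuartic ℚ).toPoly discrSqrt := by
  have hirr : Irreducible (realWeilQuartic ℚ).toPoly :=
    MonicQuartic.irreducible_toPoly not_isRoot_realWeilQuartic not_isRoot_resolvent_realWeilQuartic
  have hdeg : discrSqrt.natDegree = 3 := by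
    rw [discrSqrt]; compute_degree!
  refine hirr.coprime_iff_not_dvd.2 <|
    (MonicQuartic.monic_toPoly _).not_dvd_of_natDegree_lt (ne_zero_of_natDegree_gt (n := 2) ?_) ?_
  · rw [hdeg]; norm_num
  · rw [hdeg, MonicQuartic.natDegree_toPoly]; norm_num

theorem not_mem_adjoin_rootSet_realWeilQuartic {s : ℂ} (hs : s ^ 2 = -7) :
    s ∉ IntermediateField.adjoin ℚ ((realWeilQuartic ℚ).toPoly.rootSet ℂ) := by
  intro hmem
  have hsplits : ((realWeilQuartic ℚ).toPoly.map (algebraMap ℚ ℝ)).Splits := by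
    rw [← MonicQuartic.toPoly_map, map_realWeilQuartic]
    exact splits_realWeilQuartic
  obtain ⟨x, hx⟩ := adjoin_rootSet_le_fieldRange hsplits
    (Complex.ofRealAm.restrictScalars ℚ) hmem
  have hx2 : x ^ 2 = -7 := by
    rw [← hx] at hs
    exact Complex.ofReal_injective (by simpa using hs)
  linarith [sq_nonneg x]

end RealWeilQuartic

/-- The splitting field of `P₃` over `ℚ` has degree `48`. -/
theorem P3_splitting_field_degree : Module.finrank ℚ P3Q.SplittingField = 48 := by
  let L := IntermediateField.adjoin ℚ ((realWeilQuartic ℚ).toPoly.rootSet ℂ)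
  obtain ⟨s, hs⟩ : ∃ s : ℂ, s ^ 2 = -7 := IsAlgClosed.exists_pow_nat_eq _ two_pos
  have hsL : s ∉ L := not_mem_adjoin_rootSet_realWeilQuartic hs
  have hs2L : s ^ 2 ∈ L := hs ▸ neg_mem (ofNat_mem L 7)
  have hadjoin : IntermediateField.adjoin ℚ (P3Q.rootSet ℂ) = L ⊔ ℚ⟮s⟯ :=
    P3Q_eq_weilPolynomial ▸ adjoin_rootSet_weilPolynomial three_ne_zero
      rootSet_realWeilQuartic_nonempty (by simp [hs]) realWeilQuartic_dvd_sub_discrSqrt_sq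
      isCoprime_realWeilQuartic_discrSqrt
  calc Module.finrank ℚ P3Q.SplittingField
      = Module.finrank ℚ (IntermediateField.adjoin ℚ (P3Q.rootSet ℂ)) :=
        finrank_splittingField_eq_finrank_adjoin_rootSet (IsAlgClosed.splits _)
    _ = Module.finrank ℚ (L ⊔ ℚ⟮s⟯ : IntermediateField ℚ ℂ) := by rw [hadjoin]
    _ = Module.finrank ℚ L * 2 := finrank_sup_adjoin_simple_of_sq_mem hsL hs2L
    _ = 48 := by rw [finrank_adjoin_rootSet_realWeilQuartic]
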